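/- arXiv:1801.07398 — 3 statements merged into one kernel-verified Lean document; each statement's English description precedes it below -/
import Mathlib

section
/- Let (G, α) and (H, β) be Hom-groups and f : G → H a morphism of Hom-groups. If the invertibility index of the element f(1_G) ∈ H is n, then β^{n+2}(f(1_G)) = 1_H. -/
universe u v w

/-- A Hom-group `(G, α)`: a set with product, unit, twisting map `α` (here `map`)
and inverse, satisfying Hom-associativity, multiplicativity of `α`, Hom-unitality,
the anti-morphism property of the inverse and Hom-invertibility. -/
structure HomGroup (G : Type u) where
  mul : G → G → G
  one : G
  map : G → G
  inv : G → G
  hom_assoc : ∀ g h k : G, mul (map g) (mul h k) = mul (mul g h) (map k)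
  map_mul : ∀ g h : G, map (mul g h) = mul (map g) (map h)
  mul_one : ∀ g : G, mul g one = map g
  one_mul : ∀ g : G, mul one g = map g
  map_one : map one = one
  inv_anti : ∀ g h : G, inv (mul g h) = mul (inv h) (inv g)
  exists_hom_inv : ∀ g : G, ∃ n : ℕ,
    (map)^[n] (mul g (inv g)) = one ∧ (map)^[n] (mul (inv g) g) = one

/-- The set of exponents witnessing Hom-invertibility of `g`; the invertibility
index of `g` is the least element of this set. -/
def HomGroup.invSet {G : Type u} (hg : HomGroup G) (g : G) : Set ℕ :=
  {n : ℕ | (hg.map)^[n] (hg.mul g (hg.inv g)) = hg.one ∧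
    (hg.map)^[n] (hg.mul (hg.inv g) g) = hg.one}

/-!
If `g * g = α g`, Hom-associativity gives `α g * (g * g⁻¹) = (g * g) * α g⁻¹ = α (g * g⁻¹)`.
Applying `α^[n]` with `α^[n] (g * g⁻¹) = 1` turns the left side into `α^[n+1] g * 1 = α^[n+2] g`
and the right side into `1`. The element `f 1` satisfies `f 1 * f 1 = f 1 = β (f 1)`, so it is of
this kind and, being fixed by `β`, equals `1`.
-/

namespace HomGroup

variable {G : Type u} (hg : HomGroup G)

theorem map_iterate_one (n : ℕ) : hg.map^[n] hg.one = hg.one :=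
  Function.iterate_fixed hg.map_one n

theorem map_iterate_mul (n : ℕ) (g h : G) :
    hg.map^[n] (hg.mul g h) = hg.mul (hg.map^[n] g) (hg.map^[n] h) :=
  Function.Semiconj₂.iterate hg.map_mul n g h

theorem map_mul_mul_of_mul_self {g : G} (hself : hg.mul g g = hg.map g) (h : G) :
    hg.mul (hg.map g) (hg.mul g h) = hg.map (hg.mul g h) := by
  rw [hg.hom_assoc, hself, hg.map_mul]

theorem map_iterate_add_two_eq_one_of_mul_self {g h : G} {n : ℕ}
    (hself : hg.mul g g = hg.map g) (hinv : hg.map^[n] (hg.mul g h) = hg.one) :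
    hg.map^[n + 2] g = hg.one :=
  calc
    hg.map^[n + 2] g = hg.mul (hg.map^[n + 1] g) hg.one := by
      rw [hg.mul_one, Function.iterate_succ_apply']
    _ = hg.map^[n] (hg.mul (hg.map g) (hg.mul g h)) := by
      rw [hg.map_iterate_mul, hinv, Function.iterate_succ_apply]
    _ = hg.map (hg.map^[n] (hg.mul g h)) := by
      rw [hg.map_mul_mul_of_mul_self hself, ← Function.iterate_succ_apply,
        Function.iterate_succ_apply']
    _ = hg.one := by rw [hinv, hg.map_one]

theorem eq_one_of_mul_self_of_map_eq_self {g : G} (hself : hg.mul g g = g)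
    (hfix : hg.map g = g) : g = hg.one := by
  obtain ⟨n, hinv, -⟩ := hg.exists_hom_inv g
  rw [← hg.map_iterate_add_two_eq_one_of_mul_self (hself.trans hfix.symm) hinv,
    Function.iterate_fixed hfix]

end HomGroup

theorem homGroup_morphism_image_one_general {G : Type u} {H : Type v}
    (hg : HomGroup G) (hh : HomGroup H) (f : G → H)
    (hf_map : ∀ g : G, f (hg.map g) = hh.map (f g))
    (hf_mul : ∀ g k : G, f (hg.mul g k) = hh.mul (f g) (f k)) :
    f hg.one = hh.one := by
  have hfix : hh.map (f hg.one) = f hg.one := by rw [← hf_map, hg.map_one]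
  have hself : hh.mul (f hg.one) (f hg.one) = f hg.one := by
    rw [← hf_mul, hg.mul_one, hg.map_one]
  exact hh.eq_one_of_mul_self_of_map_eq_self hself hfix

/-- If `f : G → H` is a morphism of Hom-groups and the invertibility index of
`f(1_G)` in `H` is `n`, then `β^(n+2)(f(1_G)) = 1_H`. -/
theorem homGroup_morphism_image_one {G : Type u} {H : Type v}
    (hg : HomGroup G) (hh : HomGroup H) (f : G → H)
    (hf_map : ∀ g : G, f (hg.map g) = hh.map (f g))
    (hf_mul : ∀ g k : G, f (hg.mul g k) = hh.mul (f g) (f k))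
    (n : ℕ) (hidx : IsLeast (hh.invSet (f hg.one)) n) :
    (hh.map)^[n + 2] (f hg.one) = hh.one := by
  rw [homGroup_morphism_image_one_general hg hh f hf_map hf_mul, hh.map_iterate_one]
end

section
/- Let (G, α) be a Hom-group and (M, β) a right G-module satisfying β(m·g) = β(m)·α(g) for all g ∈ G, m ∈ M. Set C_n = M × G^n and define face maps d_i : C_n → C_{n−1} by d₀(m, g₁,…,g_n) = (m·g₁, α(g₂),…,α(g_n)); d_i(m, g₁,…,g_n) = (β(m), α(g₁),…,g_i g_{i+1},…,α(g_n)) for 1 ≤ i ≤ n−1; and d_n(m, g₁,…,g_n) = (β(m), α(g₁),…,α(g_{n−1})). Then the simplicial identities d_i ∘ d_j = d_{j−1} ∘ d_i hold for all 0 ≤ i < j ≤ n. -/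
universe u v w

/-- A dual left `G`-module: an abelian group `M` with a map `G × M → M` and an
additive map `β : M → M` with `g·(α(h)·m) = β((gh)·m)` and `1·m = β(m)`. -/
structure IsDualLeftModule {G : Type u} {M : Type v} [AddCommGroup M]
    (hg : HomGroup G) (act : G → M → M) (beta : M → M) : Prop where
  beta_add : ∀ x y : M, beta (x + y) = beta x + beta y
  compat : ∀ (g h : G) (m : M), act g (act (hg.map h) m) = beta (act (hg.mul g h) m)
  one_act : ∀ m : M, act hg.one m = beta m

/-- A dual right `G`-module: `(m·α(h))·g = β(m·(hg))` and `m·1 = β(m)`. -/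
structure IsDualRightModule {G : Type u} {M : Type v} [AddCommGroup M]
    (hg : HomGroup G) (act : M → G → M) (beta : M → M) : Prop where
  beta_add : ∀ x y : M, beta (x + y) = beta x + beta y
  compat : ∀ (g h : G) (m : M), act (act m (hg.map h)) g = beta (act m (hg.mul h g))
  act_one : ∀ m : M, act m hg.one = beta m

/-- A left `G`-module: `(gk)·β(m) = α(g)·(k·m)` and `1·m = β(m)`. -/
structure IsLeftModule {G : Type u} {M : Type v} [AddCommGroup M]
    (hg : HomGroup G) (act : G → M → M) (beta : M → M) : Prop where
  beta_add : ∀ x y : M, beta (x + y) = beta x + beta y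
  compat : ∀ (g k : G) (m : M), act (hg.mul g k) (beta m) = act (hg.map g) (act k m)
  one_act : ∀ m : M, act hg.one m = beta m

/-- A right `G`-module: `β(m)·(gk) = (m·g)·α(k)` and `m·1 = β(m)`. -/
structure IsRightModule {G : Type u} {M : Type v} [AddCommGroup M]
    (hg : HomGroup G) (act : M → G → M) (beta : M → M) : Prop where
  beta_add : ∀ x y : M, beta (x + y) = beta x + beta y
  compat : ∀ (g k : G) (m : M), act (beta m) (hg.mul g k) = act (act m g) (hg.map k)
  act_one : ∀ m : M, act m hg.one = beta m

/-- Face maps of the Hom-group chain complex with right coefficients, on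
`C_{n+1} = M × G^{n+1}`: `d₀(m,g) = (m·g₁, α(g₂),…,α(g_{n+1}))`,
`dᵢ(m,g) = (β(m), α(g₁),…,gᵢg_{i+1},…,α(g_{n+1}))` for `1 ≤ i ≤ n`, and
`d_{n+1}(m,g) = (β(m), α(g₁),…,α(g_n))`. -/
def faceR {G : Type u} {M : Type v} (hg : HomGroup G)
    (act : M → G → M) (beta : M → M) (n i : ℕ)
    (x : M × (Fin (n + 1) → G)) : M × (Fin n → G) :=
  if i = 0 then
    (act x.1 (x.2 0), fun j => hg.map (x.2 j.succ))
  else if i ≤ n then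
    (beta x.1, fun j : Fin n =>
      if (j : ℕ) + 1 < i then hg.map (x.2 j.castSucc)
      else if (j : ℕ) + 1 = i then hg.mul (x.2 j.castSucc) (x.2 j.succ)
      else hg.map (x.2 j.succ))
  else
    (beta x.1, fun j => hg.map (x.2 j.castSucc))

/-!
The face `d_i` merges the adjacent entries `i` and `i + 1` of `(m, g₁, …, gₙ)` and applies `β` or
`α` to all others; the last face fits this pattern once a point absorbing everything on its left is
appended. When `i + 1 < j` the pairs merged by `d_i` and `d_j` are disjoint, so the two faces
commute because the twists are compatible with the product and the action. When `j = i + 1` three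
consecutive entries are merged, which is Hom-associativity, or the module axiom if the first of
them is `m`.
-/

section TwistedFaces

variable {G : Type*} {M : Type*} {n : ℕ}

/-- The `G`-part of the `i`-th face of the Hom-bar construction of `(G, mul, α)`: it multiplies the
entries at positions `i - 1` and `i` (counted from `0`) and applies `α` to the others. For `i = 0`
and `i = n + 1` it drops the first, respectively the last, entry. -/
def twistedContract (mul : G → G → G) (α : G → G) (i : Fin (n + 2)) (g : Fin (n + 1) → G) :
    Fin n → G := fun k =>
  if (k : ℕ) + 1 < i then α (g k.castSucc)
  else if (k : ℕ) + 1 = i then mul (g k.castSucc) (g k.succ)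
  else α (g k.succ)

/-- The `i`-th face `M × G^(n+1) → M × G^n` of the Hom-bar construction, for a set `G` with a
product and a twist `α` acting from the right on a set `M` with a twist `β`. -/
def twistedFace (mul : G → G → G) (α : G → G) (act : M → G → M) (β : M → M) (i : Fin (n + 2))
    (x : M × (Fin (n + 1) → G)) : M × (Fin n → G) :=
  (if i = 0 then act x.1 (x.2 0) else β x.1, twistedContract mul α i x.2)

variable {mul : G → G → G} {α : G → G} {act : M → G → M} {β : M → M}

theorem twistedContract_of_lt {i : Fin (n + 2)} {k : Fin n} (h : (k : ℕ) + 1 < i)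
    (g : Fin (n + 1) → G) : twistedContract mul α i g k = α (g k.castSucc) :=
  if_pos h

theorem twistedContract_of_eq {i : Fin (n + 2)} {k : Fin n} (h : (k : ℕ) + 1 = i)
    (g : Fin (n + 1) → G) :
    twistedContract mul α i g k = mul (g k.castSucc) (g k.succ) :=
  (if_neg h.not_lt).trans (if_pos h)

theorem twistedContract_of_gt {i : Fin (n + 2)} {k : Fin n} (h : (i : ℕ) < k + 1)
    (g : Fin (n + 1) → G) : twistedContract mul α i g k = α (g k.succ) :=
  (if_neg h.not_gt).trans (if_neg h.ne')

theorem twistedContract_twistedContract (map_mul : ∀ g h, α (mul g h) = mul (α g) (α h))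
    (hom_assoc : ∀ g h k, mul (α g) (mul h k) = mul (mul g h) (α k))
    {i j : Fin (n + 2)} (hij : i ≤ j) (g : Fin (n + 2) → G) :
    twistedContract mul α i (twistedContract mul α j.succ g) =
      twistedContract mul α j (twistedContract mul α i.castSucc g) := by
  ext k
  have hij' : (i : ℕ) ≤ j := hij
  rcases lt_trichotomy ((k : ℕ) + 1) i with hki | hki | hik
  · rw [twistedContract_of_lt hki, twistedContract_of_lt (by grind),
      twistedContract_of_lt (by grind), twistedContract_of_lt (by grind)]
  · rw [twistedContract_of_eq hki, twistedContract_of_lt (by grind)]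
    rcases hij'.eq_or_lt with heq | hlt
    · rw [twistedContract_of_eq (by grind), twistedContract_of_eq (by grind),
        twistedContract_of_eq (by grind), twistedContract_of_gt (by grind)]
      exact hom_assoc _ _ _
    · rw [twistedContract_of_lt (by grind), twistedContract_of_lt (by grind),
        twistedContract_of_eq (by grind)]
      exact (map_mul _ _).symm
  · rw [twistedContract_of_gt hik]
    rcases lt_trichotomy ((k : ℕ) + 1) j with hkj | hkj | hjk
    · rw [twistedContract_of_lt (by grind), twistedContract_of_lt hkj,
        twistedContract_of_gt (by grind), Fin.succ_castSucc]
    · rw [twistedContract_of_eq (by grind), twistedContract_of_eq hkj,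
        twistedContract_of_gt (by grind), twistedContract_of_gt (by grind)]
      exact map_mul _ _
    · rw [twistedContract_of_gt (by grind), twistedContract_of_gt hjk,
        twistedContract_of_gt (by grind)]

theorem twistedFace_twistedFace_fst
    (act_mul : ∀ g k m, act (β m) (mul g k) = act (act m g) (α k))
    (map_act : ∀ g m, β (act m g) = act (β m) (α g))
    {i j : Fin (n + 2)} (hij : i ≤ j) (x : M × (Fin (n + 2) → G)) :
    (twistedFace mul α act β i (twistedFace mul α act β j.succ x)).1 =
      (twistedFace mul α act β j (twistedFace mul α act β i.castSucc x)).1 := by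
  rcases eq_or_ne i 0 with rfl | hi
  · rcases eq_or_ne j 0 with rfl | hj
    · simpa [twistedFace, twistedContract] using act_mul (x.2 0) (x.2 1) x.1
    · simpa [twistedFace, twistedContract, hj, Fin.pos_iff_ne_zero] using
        (map_act (x.2 0) x.1).symm
  · have hj : j ≠ 0 := Fin.ne_zero_of_lt ((Fin.pos_of_ne_zero hi).trans_le hij)
    simp [twistedFace, hi, hj]

theorem homGroup_homology_right_simplicial_general
    (map_mul : ∀ g h, α (mul g h) = mul (α g) (α h))
    (hom_assoc : ∀ g h k, mul (α g) (mul h k) = mul (mul g h) (α k))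
    (act_mul : ∀ g k m, act (β m) (mul g k) = act (act m g) (α k))
    (map_act : ∀ g m, β (act m g) = act (β m) (α g))
    {i j : Fin (n + 2)} (hij : i ≤ j) (x : M × (Fin (n + 2) → G)) :
    twistedFace mul α act β i (twistedFace mul α act β j.succ x) =
      twistedFace mul α act β j (twistedFace mul α act β i.castSucc x) :=
  Prod.ext (twistedFace_twistedFace_fst act_mul map_act hij x)
    (twistedContract_twistedContract map_mul hom_assoc hij x.2)

theorem twistedFace_eq_faceR (hg : HomGroup G) (act : M → G → M) (β : M → M) (i : Fin (n + 2))
    (x : M × (Fin (n + 1) → G)) :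
    twistedFace hg.mul hg.map act β i x = faceR hg act β n i x := by
  unfold twistedFace faceR
  rcases eq_or_ne i 0 with rfl | hi
  · rw [if_pos rfl, if_pos (Fin.val_zero _)]
    exact congrArg (Prod.mk _) (funext fun k => twistedContract_of_gt k.val.succ_pos x.2)
  · have hi' : (i : ℕ) ≠ 0 := Fin.val_ne_zero_iff.mpr hi
    rw [if_neg hi, if_neg hi']
    split_ifs with hin
    · rfl
    · exact congrArg (Prod.mk _) (funext fun k => twistedContract_of_lt (by omega) x.2)

end TwistedFaces

/-- For a right `G`-module `(M, β)` with `β(m·g) = β(m)·α(g)`, the face maps of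
the Hom-group chain complex `C_n = M × G^n` satisfy the simplicial identities
`dᵢ ∘ dⱼ = d_{j−1} ∘ dᵢ` for `0 ≤ i < j ≤ n + 2`. -/
theorem homGroup_homology_right_simplicial {G : Type u} {M : Type v}
    [AddCommGroup M] (hg : HomGroup G) (ract : M → G → M) (beta : M → M)
    (hM : IsRightModule hg ract beta)
    (hcond : ∀ (g : G) (m : M), beta (ract m g) = ract (beta m) (hg.map g)) :
    ∀ (n i j : ℕ), i < j → j ≤ n + 2 → ∀ x : M × (Fin (n + 2) → G),
      faceR hg ract beta n i (faceR hg ract beta (n + 1) j x) =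
        faceR hg ract beta n (j - 1) (faceR hg ract beta (n + 1) i x) := by
  rintro n i (_ | j) hij hj x
  · contradiction
  · have h := homGroup_homology_right_simplicial_general hg.map_mul hg.hom_assoc hM.compat hcond
      (i := ⟨i, by omega⟩) (j := ⟨j, by omega⟩) (Nat.le_of_lt_succ hij) x
    simpa only [twistedFace_eq_faceR, Fin.succ_mk, Fin.castSucc_mk, Nat.add_sub_cancel] using h
end

section
/- Let (G, α) be a Hom-group satisfying α(g⁻¹) = α(g)⁻¹ for all g ∈ G, and let (M, β) be a right G-module satisfying β(m·g) = β(m)·α(g). Let M̃ = M be the left G-module with g·m := m·g⁻¹. Define F : G^n × M̃ → M × G^n by F(g₁,…,g_n, m) = (m, g_n⁻¹,…,g₁⁻¹). Then d₀^{M} ∘ F = F ∘ d₀^{M̃}, d_n^{M} ∘ F = F ∘ d_n^{M̃}, and d_i^{M} ∘ F = F ∘ d_{n−i}^{M̃} for 1 ≤ i ≤ n−1, where d^{M̃} denotes the face maps of Hom-group homology with left coefficients M̃ and d^{M} those with right coefficients M. Moreover F is a bijection whenever g ↦ g⁻¹ is a bijection of G. -/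
universe u v w

/-- Face maps of the Hom-group chain complex with left coefficients, on
`C_{n+1} = G^{n+1} × M`: `d₀(g,m) = (α(g₁),…,α(g_n), g_{n+1}·m)`,
`dᵢ(g,m) = (α(g₁),…,gᵢg_{i+1},…,α(g_{n+1}), β(m))` for `1 ≤ i ≤ n`, and
`d_{n+1}(g,m) = (α(g₂),…,α(g_{n+1}), β(m))`. -/
def faceL {G : Type u} {M : Type v} (hg : HomGroup G)
    (act : G → M → M) (beta : M → M) (n i : ℕ)
    (x : (Fin (n + 1) → G) × M) : (Fin n → G) × M :=
  if i = 0 then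
    (fun j => hg.map (x.1 j.castSucc), act (x.1 (Fin.last n)) x.2)
  else if i ≤ n then
    ((fun j : Fin n =>
      if (j : ℕ) + 1 < i then hg.map (x.1 j.castSucc)
      else if (j : ℕ) + 1 = i then hg.mul (x.1 j.castSucc) (x.1 j.succ)
      else hg.map (x.1 j.succ)), beta x.2)
  else
    (fun j => hg.map (x.1 j.succ), beta x.2)

/-- The comparison map `F(g₁,…,g_n, m) = (m, g_n⁻¹,…,g₁⁻¹)` between chains with
left coefficients `M̃` and right coefficients `M`. -/
def Fpair {G : Type u} {M : Type v} (hg : HomGroup G) (n : ℕ)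
    (x : (Fin n → G) × M) : M × (Fin n → G) :=
  (x.2, fun j => hg.inv (x.1 j.rev))

/-! Up to `α`, every face map deletes an entry or multiplies two neighbours. Reversing a tuple
and inverting its entries turns multiplication at position `i` into multiplication at the mirrored
position, because inversion reverses products and commutes with `α`. The end faces are the same
statement for the extreme positions, and there the definition of the action on `M̃` makes the
`M`-components agree. -/

namespace HomGroup

variable {G : Type u} (hg : HomGroup G) {n : ℕ}

/-- The `G`-component shared by the face maps in degree `n + 1`: multiply the entries in
(one-based) positions `i` and `i + 1` and apply `α` to the others. The extreme values `i = 0` and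
`i = n + 1` drop the first and the last entry, so that outer faces are covered too. -/
def contract (i : ℕ) (g : Fin (n + 1) → G) (j : Fin n) : G :=
  if (j : ℕ) + 1 < i then hg.map (g j.castSucc)
  else if (j : ℕ) + 1 = i then hg.mul (g j.castSucc) (g j.succ)
  else hg.map (g j.succ)

/-- The `G`-component of the comparison map `F`: reverse a tuple and invert its entries. -/
def invRev (g : Fin n → G) (j : Fin n) : G :=
  hg.inv (g j.rev)

theorem contract_zero (g : Fin (n + 1) → G) :
    hg.contract 0 g = fun j => hg.map (g j.succ) := by
  funext j
  simp [contract]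

theorem contract_of_lt {i : ℕ} (hi : n < i) (g : Fin (n + 1) → G) :
    hg.contract i g = fun j => hg.map (g j.castSucc) := by
  funext j
  exact if_pos (by omega)

theorem contract_invRev (hinv : ∀ g : G, hg.map (hg.inv g) = hg.inv (hg.map g))
    {i k : ℕ} (hik : i + k = n + 1) (g : Fin (n + 1) → G) :
    hg.contract i (hg.invRev g) = hg.invRev (hg.contract k g) := by
  funext j
  have hj := j.isLt
  simp only [contract, invRev, Fin.rev_castSucc, Fin.rev_succ, Fin.val_rev]
  rcases lt_trichotomy ((j : ℕ) + 1) i with hlt | heq | hgt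
  · rw [if_pos hlt, if_neg (by omega), if_neg (by omega), hinv]
  · rw [if_neg heq.not_lt, if_pos heq, if_neg (by omega), if_pos (by omega), hg.inv_anti]
  · rw [if_neg hgt.not_gt, if_neg hgt.ne', if_pos (by omega), hinv]

theorem invRev_bijective (hb : Function.Bijective hg.inv) :
    Function.Bijective (hg.invRev (n := n)) :=
  (Fin.revPerm.arrowCongr (Equiv.ofBijective hg.inv hb)).bijective

end HomGroup

section Faces

variable {G : Type u} {M : Type v} (hg : HomGroup G) (beta : M → M) {n : ℕ}

theorem faceR_zero (ract : M → G → M) (x : M × (Fin (n + 1) → G)) :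
    faceR hg ract beta n 0 x = (ract x.1 (x.2 0), hg.contract 0 x.2) := by
  rw [hg.contract_zero]
  rfl

theorem faceR_of_ne_zero (ract : M → G → M) {i : ℕ} (hi : i ≠ 0)
    (x : M × (Fin (n + 1) → G)) :
    faceR hg ract beta n i x = (beta x.1, hg.contract i x.2) := by
  rw [faceR, if_neg hi]
  split_ifs with hin
  · rfl
  · rw [hg.contract_of_lt (not_le.mp hin)]

theorem faceL_zero (lact : G → M → M) (x : (Fin (n + 1) → G) × M) :
    faceL hg lact beta n 0 x = (hg.contract (n + 1) x.1, lact (x.1 (Fin.last n)) x.2) := by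
  rw [hg.contract_of_lt n.lt_succ_self]
  rfl

theorem faceL_of_ne_zero_of_le (lact : G → M → M) {i : ℕ} (hi : i ≠ 0) (hin : i ≤ n)
    (x : (Fin (n + 1) → G) × M) :
    faceL hg lact beta n i x = (hg.contract i x.1, beta x.2) := by
  rw [faceL, if_neg hi, if_pos hin]
  rfl

theorem faceL_last (lact : G → M → M) (x : (Fin (n + 1) → G) × M) :
    faceL hg lact beta n (n + 1) x = (hg.contract 0 x.1, beta x.2) := by
  rw [faceL, if_neg n.succ_ne_zero, if_neg n.not_succ_le_self, hg.contract_zero]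

theorem Fpair_apply (x : (Fin n → G) × M) : Fpair hg n x = (x.2, hg.invRev x.1) :=
  rfl

theorem Fpair_bijective (hb : Function.Bijective hg.inv) :
    Function.Bijective (Fpair hg (M := M) n) :=
  Prod.swap_bijective.comp ((hg.invRev_bijective hb).prodMap Function.bijective_id)

theorem faceR_zero_Fpair (hinv : ∀ g : G, hg.map (hg.inv g) = hg.inv (hg.map g))
    (ract : M → G → M) (x : (Fin (n + 1) → G) × M) :
    faceR hg ract beta n 0 (Fpair hg (n + 1) x) =
      Fpair hg n (faceL hg (fun g m => ract m (hg.inv g)) beta n 0 x) := by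
  simp only [faceR_zero, faceL_zero, Fpair_apply, hg.contract_invRev hinv (zero_add (n + 1)),
    HomGroup.invRev, Fin.rev_zero]

theorem faceR_last_Fpair (hinv : ∀ g : G, hg.map (hg.inv g) = hg.inv (hg.map g))
    (ract : M → G → M) (lact : G → M → M) (x : (Fin (n + 1) → G) × M) :
    faceR hg ract beta n (n + 1) (Fpair hg (n + 1) x) =
      Fpair hg n (faceL hg lact beta n (n + 1) x) := by
  rw [faceR_of_ne_zero hg beta ract n.succ_ne_zero, faceL_last]
  simp only [Fpair_apply, hg.contract_invRev hinv (add_zero (n + 1))]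

theorem faceR_inner_Fpair (hinv : ∀ g : G, hg.map (hg.inv g) = hg.inv (hg.map g))
    (ract : M → G → M) (lact : G → M → M) {i : ℕ} (hi : 1 ≤ i) (hin : i ≤ n)
    (x : (Fin (n + 1) → G) × M) :
    faceR hg ract beta n i (Fpair hg (n + 1) x) =
      Fpair hg n (faceL hg lact beta n (n + 1 - i) x) := by
  have hsum : i + (n + 1 - i) = n + 1 := by omega
  rw [faceR_of_ne_zero hg beta ract (by omega),
    faceL_of_ne_zero_of_le hg beta lact (by omega) (by omega)]
  simp only [Fpair_apply, hg.contract_invRev hinv hsum]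

end Faces

theorem homGroup_homology_left_right_compare_general {G : Type u} {M : Type v}
    (hg : HomGroup G)
    (hinv : ∀ g : G, hg.map (hg.inv g) = hg.inv (hg.map g))
    (ract : M → G → M) (beta : M → M) :
    (∀ (n : ℕ) (x : (Fin (n + 1) → G) × M),
      faceR hg ract beta n 0 (Fpair hg (n + 1) x) =
        Fpair hg n (faceL hg (fun g m => ract m (hg.inv g)) beta n 0 x)) ∧
    (∀ (n : ℕ) (x : (Fin (n + 1) → G) × M),
      faceR hg ract beta n (n + 1) (Fpair hg (n + 1) x) =
        Fpair hg n (faceL hg (fun g m => ract m (hg.inv g)) beta n (n + 1) x)) ∧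
    (∀ (n i : ℕ), 1 ≤ i → i ≤ n → ∀ x : (Fin (n + 1) → G) × M,
      faceR hg ract beta n i (Fpair hg (n + 1) x) =
        Fpair hg n (faceL hg (fun g m => ract m (hg.inv g)) beta n (n + 1 - i) x)) ∧
    (Function.Bijective hg.inv →
      ∀ n : ℕ, Function.Bijective (Fpair hg (M := M) n)) :=
  ⟨fun _ => faceR_zero_Fpair hg beta hinv ract,
    fun _ => faceR_last_Fpair hg beta hinv ract _,
    fun _ _ hi hin => faceR_inner_Fpair hg beta hinv ract _ hi hin,
    fun hb _ => Fpair_bijective hg hb⟩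

/-- Let `(M, β)` be a right `G`-module with `β(m·g) = β(m)·α(g)`, on a Hom-group
with `α(g⁻¹) = α(g)⁻¹`, and let `M̃` be the left `G`-module `g·m := m·g⁻¹`.
Then `d₀^{M} ∘ F = F ∘ d₀^{M̃}`, `d_{n+1}^{M} ∘ F = F ∘ d_{n+1}^{M̃}`, and
`dᵢ^{M} ∘ F = F ∘ d_{n+1−i}^{M̃}` for `1 ≤ i ≤ n`; moreover `F` is a bijection
whenever `g ↦ g⁻¹` is a bijection of `G`. -/
theorem homGroup_homology_left_right_compare {G : Type u} {M : Type v}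
    [AddCommGroup M] (hg : HomGroup G)
    (hinv : ∀ g : G, hg.map (hg.inv g) = hg.inv (hg.map g))
    (ract : M → G → M) (beta : M → M) (hM : IsRightModule hg ract beta)
    (hcond : ∀ (g : G) (m : M), beta (ract m g) = ract (beta m) (hg.map g)) :
    (∀ (n : ℕ) (x : (Fin (n + 1) → G) × M),
      faceR hg ract beta n 0 (Fpair hg (n + 1) x) =
        Fpair hg n (faceL hg (fun g m => ract m (hg.inv g)) beta n 0 x)) ∧
    (∀ (n : ℕ) (x : (Fin (n + 1) → G) × M),
      faceR hg ract beta n (n + 1) (Fpair hg (n + 1) x) =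
        Fpair hg n (faceL hg (fun g m => ract m (hg.inv g)) beta n (n + 1) x)) ∧
    (∀ (n i : ℕ), 1 ≤ i → i ≤ n → ∀ x : (Fin (n + 1) → G) × M,
      faceR hg ract beta n i (Fpair hg (n + 1) x) =
        Fpair hg n (faceL hg (fun g m => ract m (hg.inv g)) beta n (n + 1 - i) x)) ∧
    (Function.Bijective hg.inv →
      ∀ n : ℕ, Function.Bijective (Fpair hg (M := M) n)) :=
  homGroup_homology_left_right_compare_general hg hinv ract beta
end
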